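/- Consider a finite-horizon MDP and fix a policy $\pi$. Suppose functions $V_h, V^\pi_h : \mathcal{S}\to\mathbb{R}$ satisfy, for every state $x$ and every $h \le H$ (with $V_{H+1} = V^\pi_{H+1} = 0$), $V_h(x) - V^\pi_h(x) \le g_h(x, \pi_h(x)) + (1 + \tfrac{1}{H}) \sum_y \mathbb{P}(y\mid x, \pi_h(x))(V_{h+1}(y) - V^\pi_{h+1}(y))$ for some nonnegative functions $g_h$. Then $V_1(x_1) - V^\pi_1(x_1) \le e \cdot \mathbb{E}_{\mathbb{P},\pi}\big[\sum_{h=1}^H g_h(x_h, a_h)\big]$, where the expectation is over the trajectory generated by $\pi$ on $\mathbb{P}$ starting from $x_1$. -/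

import Mathlib

/-!
Write `Δ h = V h - Vπ h`, `c = 1 + 1/H`, and let `ρ h` be the law of the state `x_h`. Averaging the
recursion at step `h` against `ρ h ≥ 0` and using `ρ (h+1) = ρ h P` gives
`E[Δ h] ≤ E[g h] + c * E[Δ (h+1)]` (`occupancy_step`). Unrolling from `h = 1`, where `ρ 1` is the
point mass at `x1`, yields `Δ 1 x1 ≤ ∑ c ^ (h-1) * E[g h]`, since `Δ (H+1) = 0`. Every weight
satisfies `c ^ (h-1) ≤ c ^ H ≤ e` because `1 + t ≤ exp t`, and each `E[g h]` is nonnegative.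
-/

/-- The recursion at one step, averaged against the state law `r`; the law `r'` of the next state
is the pushforward of `r` under the transition matrix `Q`. -/
lemma occupancy_step {S : Type*} [Fintype S] (c : ℝ) (Q : S → S → ℝ) (r r' D D' G : S → ℝ)
    (hr : ∀ x, 0 ≤ r x) (hr' : ∀ y, r' y = ∑ x, r x * Q x y)
    (hD : ∀ x, D x ≤ G x + c * ∑ y, Q x y * D' y) :
    ∑ x, r x * D x ≤ ∑ x, r x * G x + c * ∑ y, r' y * D' y := by
  have key : ∑ y, r' y * D' y = ∑ x, r x * ∑ y, Q x y * D' y := by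
    simp_rw [hr', Finset.sum_mul, Finset.mul_sum]
    rw [Finset.sum_comm]
    simp_rw [mul_assoc]
  rw [key, Finset.mul_sum, ← Finset.sum_add_distrib]
  refine Finset.sum_le_sum fun x _ => ?_
  calc r x * D x ≤ r x * (G x + c * ∑ y, Q x y * D' y) :=
        mul_le_mul_of_nonneg_left (hD x) (hr x)
    _ = _ := by ring

lemma one_add_inv_pow_le_exp_one (H k : ℕ) (hH : 1 ≤ H) (hk : k ≤ H) :
    (1 + 1 / (H : ℝ)) ^ k ≤ Real.exp 1 := by
  have hpos : (0 : ℝ) < H := by exact_mod_cast hH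
  have h0 : 0 ≤ 1 / (H : ℝ) := by positivity
  calc (1 + 1 / (H : ℝ)) ^ k ≤ (1 + 1 / (H : ℝ)) ^ H :=
        pow_le_pow_right₀ (by linarith) hk
    _ ≤ Real.exp (1 / (H : ℝ)) ^ H := by
        refine pow_le_pow_left₀ (by linarith) ?_ H
        linarith [Real.add_one_le_exp (1 / (H : ℝ))]
    _ = Real.exp 1 := by
        rw [← Real.exp_nat_mul, mul_one_div_cancel hpos.ne']

/-- Solving the `(1+1/H)`-recursion: the top-level value gap is at most
`e` times the expected accumulated error terms along the trajectory. -/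
theorem stmt11 {S A : Type*} [Fintype S] [DecidableEq S]
    (H : ℕ) (hH : 1 ≤ H)
    (P : S → A → S → ℝ)
    (hP : ∀ x a, (∀ y, 0 ≤ P x a y) ∧ ∑ y, P x a y = 1)
    (π : ℕ → S → A) (x1 : S)
    (V Vπ : ℕ → S → ℝ) (g : ℕ → S → A → ℝ)
    (hg : ∀ h x a, 0 ≤ g h x a)
    (hV_top : ∀ x, V (H+1) x = 0) (hVπ_top : ∀ x, Vπ (H+1) x = 0)
    (hrec : ∀ h, 1 ≤ h → h ≤ H → ∀ x,
      V h x - Vπ h x ≤ g h x (π h x) +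
        (1 + 1 / (H : ℝ)) *
          ∑ y, P x (π h x) y * (V (h+1) y - Vπ (h+1) y))
    (ρ : ℕ → S → ℝ)
    (hρ1 : ∀ x, ρ 1 x = if x = x1 then 1 else 0)
    (hρ : ∀ h, 1 ≤ h → h ≤ H → ∀ y,
      ρ (h+1) y = ∑ x, ρ h x * P x (π h x) y) :
    V 1 x1 - Vπ 1 x1 ≤
      Real.exp 1 * ∑ h ∈ Finset.Icc 1 H, ∑ x, ρ h x * g h x (π h x) := by
  have hρ0 : ∀ k, k ≤ H → ∀ x, 0 ≤ ρ (k + 1) x := by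
    intro k
    induction k with
    | zero =>
      intro _ x
      rw [zero_add, hρ1]
      split_ifs <;> norm_num
    | succ k ih =>
      intro hk y
      rw [hρ (k + 1) (by omega) hk y]
      exact Finset.sum_nonneg fun x _ => mul_nonneg (ih (by omega) x) ((hP _ _).1 y)
  set c : ℝ := 1 + 1 / (H : ℝ) with hc
  have hc0 : 0 ≤ c := by positivity
  -- The recursion unrolled `k` times, with the remainder carried by the law of `x_{k+1}`.
  have unroll : ∀ k, k ≤ H → V 1 x1 - Vπ 1 x1 ≤
      ∑ i ∈ Finset.range k, c ^ i * ∑ x, ρ (i + 1) x * g (i + 1) x (π (i + 1) x)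
        + c ^ k * ∑ x, ρ (k + 1) x * (V (k + 1) x - Vπ (k + 1) x) := by
    intro k
    induction k with
    | zero =>
      intro _
      simp [hρ1]
    | succ k ih =>
      intro hk
      have hstep := occupancy_step c (fun x y => P x (π (k + 1) x) y) (ρ (k + 1)) (ρ (k + 1 + 1))
        (fun x => V (k + 1) x - Vπ (k + 1) x)
        (fun x => V (k + 1 + 1) x - Vπ (k + 1 + 1) x)
        (fun x => g (k + 1) x (π (k + 1) x))
        (hρ0 k (by omega)) (hρ (k + 1) (by omega) hk) (hrec (k + 1) (by omega) hk)
      have hmul := mul_le_mul_of_nonneg_left hstep (pow_nonneg hc0 k)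
      rw [Finset.sum_range_succ, pow_succ]
      linarith [ih (by omega)]
  have hfin := unroll H le_rfl
  simp only [hV_top, hVπ_top, sub_self, mul_zero, Finset.sum_const_zero, add_zero] at hfin
  refine hfin.trans ?_
  rw [← Finset.Ico_add_one_right_eq_Icc, Finset.sum_Ico_eq_sum_range, Finset.mul_sum,
    Nat.add_sub_cancel]
  refine Finset.sum_le_sum fun i hi => ?_
  have hiH : i < H := Finset.mem_range.mp hi
  rw [add_comm 1 i]
  exact mul_le_mul_of_nonneg_right (one_add_inv_pow_le_exp_one H i hH hiH.le)
    (Finset.sum_nonneg fun x _ => mul_nonneg (hρ0 i hiH.le x) (hg _ _ _))
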